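/- Let d ≥ 2 be an even integer and n = d + 2. Let y be a nonzero solution of the Schrödinger equation with parameters (α, λ) that is subdominant in every sector S₀, S₂, S₄, …, S_{n−2}. Then y has only finitely many zeros, each zero of y is simple (y and y' do not vanish simultaneously), and there exist polynomials Q and φ with complex coefficients such that y(z) = Q(z)·e^{φ(z)} for all z ∈ ℂ, where deg Q equals the number of zeros of y and deg φ = (d+2)/2. -/

import Mathlib

open Complex Filter Topology

/-- The polynomial potential `P_α(z) = z^d + α_{d-1} z^{d-1} + ⋯ + α₁ z`. -/
noncomputable def Pol (d : ℕ) (α : Fin (d - 1) → ℂ) (z : ℂ) : ℂ :=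
  z ^ d + ∑ i : Fin (d - 1), α i * z ^ ((i : ℕ) + 1)

/-- `y` is an (entire) solution of the Schrödinger equation `y'' = (P_α - λ) y`. -/
def IsSol (d : ℕ) (α : Fin (d - 1) → ℂ) (lam : ℂ) (y : ℂ → ℂ) : Prop :=
  Differentiable ℂ y ∧ ∀ z : ℂ, deriv (deriv y) z = (Pol d α z - lam) * y z

/-- `θ` is a ray direction of the Stokes sector `S_j`. -/
def DirIn (n j : ℕ) (θ : ℝ) : Prop :=
  |θ - 2 * Real.pi * j / n| < Real.pi / n

/-- `y` is subdominant in the Stokes sector `S_j`: it tends to `0` along every ray in `S_j`. -/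
def Subdominant (n j : ℕ) (y : ℂ → ℂ) : Prop :=
  ∀ θ : ℝ, DirIn n j θ →
    Tendsto (fun r : ℝ => y ((r : ℂ) * Complex.exp (θ * Complex.I))) atTop (𝓝 0)

theorem le_pow_of_deriv_le {f f' : ℝ → ℝ} {R : ℝ} {N : ℕ} (hR : 0 < R)
    (hf : ∀ r, R ≤ r → HasDerivAt f (f' r) r) (hle : ∀ r, R ≤ r → r * f' r ≤ N * f r)
    {r : ℝ} (hr : R ≤ r) : f r ≤ f R / R ^ N * r ^ N := by
  have hd : ∀ x, R ≤ x → HasDerivAt (fun x => f x / x ^ N)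
      ((f' x * x ^ N - f x * (N * x ^ (N - 1))) / (x ^ N) ^ 2) x := fun x hx =>
    (hf x hx).div (hasDerivAt_pow N x) (pow_pos (hR.trans_le hx) N).ne'
  have hanti : AntitoneOn (fun x => f x / x ^ N) (Set.Ici R) := by
    refine antitoneOn_of_hasDerivWithinAt_nonpos (convex_Ici R)
      (fun x hx => (hd x hx).continuousAt.continuousWithinAt)
      (fun x hx => (hd x (interior_subset hx)).hasDerivWithinAt) fun x hx => ?_
    have hx : R ≤ x := interior_subset hx
    have hx0 : 0 < x := hR.trans_le hx
    refine div_nonpos_of_nonpos_of_nonneg ?_ (by positivity)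
    rcases N with _ | N
    · have := hle x hx
      simp only [Nat.cast_zero, zero_mul] at this
      simpa using nonpos_of_mul_nonpos_right this hx0
    · have := mul_le_mul_of_nonneg_right (hle x hx) (pow_nonneg hx0.le N)
      simp only [Nat.add_sub_cancel, pow_succ]
      linarith
  have := hanti Set.self_mem_Ici (show r ∈ Set.Ici R from hr) hr
  have hr0 : 0 < r := hR.trans_le hr
  simpa using (div_le_iff₀ (pow_pos hr0 N)).1 this

theorem le_exp_of_deriv_le {f f' : ℝ → ℝ} {C : ℝ} {N : ℕ}
    (hf : ∀ r, 0 ≤ r → HasDerivAt f (f' r) r)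
    (hle : ∀ r, 0 ≤ r → f' r ≤ C * (N + 1) * (1 + r) ^ N * f r)
    {r : ℝ} (hr : 0 ≤ r) :
    f r ≤ f 0 * Real.exp (C * ((1 + r) ^ (N + 1) - 1)) := by
  have hd : ∀ x, 0 ≤ x → HasDerivAt (fun x => f x * Real.exp (-(C * ((1 + x) ^ (N + 1) - 1))))
      ((f' x - C * (N + 1) * (1 + x) ^ N * f x) * Real.exp (-(C * ((1 + x) ^ (N + 1) - 1)))) x := by
    intro x hx
    have h1 : HasDerivAt (fun x : ℝ => -(C * ((1 + x) ^ (N + 1) - 1)))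
        (-(C * (N + 1) * (1 + x) ^ N)) x := by
      refine (((((hasDerivAt_id' x).const_add 1).fun_pow (N + 1)).sub_const
        1).const_mul C).fun_neg.congr_deriv ?_
      push_cast
      ring
    exact ((hf x hx).fun_mul h1.exp).congr_deriv (by ring)
  have hanti : AntitoneOn (fun x => f x * Real.exp (-(C * ((1 + x) ^ (N + 1) - 1))))
      (Set.Ici 0) := by
    refine antitoneOn_of_hasDerivWithinAt_nonpos (convex_Ici 0)
      (fun x hx => (hd x hx).continuousAt.continuousWithinAt)
      (fun x hx => (hd x (interior_subset hx)).hasDerivWithinAt) fun x hx => ?_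
    have hx : 0 ≤ x := interior_subset (s := Set.Ici (0 : ℝ)) hx
    exact mul_nonpos_of_nonpos_of_nonneg (by linarith [hle x hx]) (Real.exp_pos _).le
  have := hanti Set.self_mem_Ici (show r ∈ Set.Ici 0 from hr) hr
  simp only [Real.exp_neg, ← div_eq_mul_inv] at this
  rw [div_le_iff₀ (Real.exp_pos _)] at this
  simpa using this

section System

variable {A B U P Q S : ℝ → ℂ} {e : ℂ} {C R : ℝ}

theorem inner_mul_self_eq (c z : ℂ) : inner ℝ z (c * z) = c.re * ‖z‖ ^ 2 := by
  rw [← Complex.normSq_eq_norm_sq, Complex.normSq_apply]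
  simp [Complex.inner, Complex.mul_re, Complex.mul_im]
  ring

theorem abs_inner_coupling_le {a b u p q e z : ℂ} {r C : ℝ} (he : ‖e‖ = 1) (hr : 0 < r)
    (hab : a - b = 2 * p * u) (hq : r * ‖q‖ ≤ C * ‖p‖) (hC : 0 ≤ C) :
    r * |inner ℝ z (e * (q * u))| ≤ C / 2 * (‖z‖ * (‖a‖ + ‖b‖)) := by
  have h1 : |inner ℝ z (e * (q * u))| ≤ ‖z‖ * (‖q‖ * ‖u‖) := by
    simpa [he] using abs_real_inner_le_norm z (e * (q * u))
  have h2 : 2 * ‖p‖ * ‖u‖ ≤ ‖a‖ + ‖b‖ := by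
    have : ‖a - b‖ = 2 * ‖p‖ * ‖u‖ := by rw [hab]; simp
    rw [← this]; exact norm_sub_le a b
  have h3 := mul_le_mul_of_nonneg_right hq (norm_nonneg u)
  calc r * |inner ℝ z (e * (q * u))| ≤ r * (‖z‖ * (‖q‖ * ‖u‖)) := by gcongr
    _ = ‖z‖ * (r * ‖q‖ * ‖u‖) := by ring
    _ ≤ ‖z‖ * (C / 2 * (2 * ‖p‖ * ‖u‖)) :=
      mul_le_mul_of_nonneg_left (by linarith) (norm_nonneg z)
    _ ≤ ‖z‖ * (C / 2 * (‖a‖ + ‖b‖)) := by gcongr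
    _ = _ := by ring

theorem exists_pow_bound_of_re_nonpos (hR : 0 < R) (he : ‖e‖ = 1) (hC : 0 ≤ C)
    (hA : ∀ r, R ≤ r → HasDerivAt A (e * (2 * P r * A r + Q r * U r)) r)
    (hB : ∀ r, R ≤ r → HasDerivAt B (e * (S r * U r)) r)
    (hAB : ∀ r, R ≤ r → A r - B r = 2 * P r * U r)
    (hQ : ∀ r, R ≤ r → r * ‖Q r‖ ≤ C * ‖P r‖) (hS : ∀ r, R ≤ r → r * ‖S r‖ ≤ C * ‖P r‖)
    (hg : ∀ r, R ≤ r → (e * P r).re ≤ 0) :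
    ∃ (M : ℝ) (N : ℕ), ∀ r, R ≤ r → ‖A r‖ ^ 2 + ‖B r‖ ^ 2 ≤ M * r ^ N := by
  obtain ⟨N, hN⟩ := exists_nat_ge (2 * C)
  refine ⟨_, N, fun r hr => le_pow_of_deriv_le (N := N) hR
    (fun r hr => (hA r hr).norm_sq.fun_add (hB r hr).norm_sq) (fun r hr => ?_) hr⟩
  have hr0 : 0 < r := hR.trans_le hr
  have h1 : inner ℝ (A r) (e * (2 * P r * A r + Q r * U r))
      = 2 * (e * P r).re * ‖A r‖ ^ 2 + inner ℝ (A r) (e * (Q r * U r)) := by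
    rw [show e * (2 * P r * A r + Q r * U r)
      = ((2 : ℝ) * (e * P r)) * A r + e * (Q r * U r) by push_cast; ring, inner_add_right,
      inner_mul_self_eq, Complex.re_ofReal_mul]
  have h2 := abs_inner_coupling_le (z := A r) he hr0 (hAB r hr) (hQ r hr) hC
  have h3 := abs_inner_coupling_le (z := B r) he hr0 (hAB r hr) (hS r hr) hC
  have h4 := mul_le_mul_of_nonneg_left (le_abs_self (inner ℝ (A r) (e * (Q r * U r)))) hr0.le
  have h5 := mul_le_mul_of_nonneg_left (le_abs_self (inner ℝ (B r) (e * (S r * U r)))) hr0.le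
  have h6 : r * ((e * P r).re * ‖A r‖ ^ 2) ≤ 0 := mul_nonpos_of_nonneg_of_nonpos hr0.le
    (mul_nonpos_of_nonpos_of_nonneg (hg r hr) (by positivity))
  have h7 : 2 * C * (‖A r‖ ^ 2 + ‖B r‖ ^ 2) ≤ N * (‖A r‖ ^ 2 + ‖B r‖ ^ 2) := by gcongr
  have h8 : 0 ≤ C * (‖A r‖ - ‖B r‖) ^ 2 := by positivity
  rw [h1]
  nlinarith

theorem norm_sq_le_of_tendsto_zero {D : ℝ} {k : ℕ} (hR : 0 < R) (he : ‖e‖ = 1) (hC : 0 ≤ C)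
    (hA : ∀ r, R ≤ r → HasDerivAt A (e * (P r * A r + Q r * U r)) r)
    (hB : ∀ r, R ≤ r → HasDerivAt B (e * (-P r * B r + S r * U r)) r)
    (hAB : ∀ r, R ≤ r → A r - B r = 2 * P r * U r)
    (hQ : ∀ r, R ≤ r → r * ‖Q r‖ ≤ C * ‖P r‖) (hS : ∀ r, R ≤ r → r * ‖S r‖ ≤ C * ‖P r‖)
    (hg : ∀ r, R ≤ r → 5 * C + 4 * k ≤ r * (e * P r).re)
    (hP : ∀ r, R ≤ r → ‖P r‖ ≤ D * r ^ k)
    (hU : Tendsto U atTop (𝓝 0)) {r : ℝ} (hr : R ≤ r) : ‖A r‖ ^ 2 ≤ 4 * ‖B r‖ ^ 2 := by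
  by_contra! hlt
  have hr0 : 0 < r := hR.trans_le hr
  set c : ℝ := (‖A r‖ ^ 2 - 4 * ‖B r‖ ^ 2) / r ^ (2 * k) with hc
  have hcpos : 0 < c := div_pos (by linarith) (by positivity)
  have key : ∀ x, r ≤ x → c * x ^ (2 * k) ≤ ‖A x‖ ^ 2 - 4 * ‖B x‖ ^ 2 := by
    intro x hx
    have := le_pow_of_deriv_le (f := fun x => 4 * ‖B x‖ ^ 2 - ‖A x‖ ^ 2) (N := 2 * k) hr0
      (fun x hx => (((hB x (hr.trans hx)).norm_sq.const_mul 4).sub (hA x (hr.trans hx)).norm_sq))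
      (fun x hx => ?_) hx
    · rw [show (4 * ‖B r‖ ^ 2 - ‖A r‖ ^ 2) / r ^ (2 * k) = -c by rw [hc, ← neg_div]; ring] at this
      linarith
    have hx0 : 0 < x := hr0.trans_le hx
    have hx' := hr.trans hx
    have h1 : inner ℝ (A x) (e * (P x * A x + Q x * U x))
        = (e * P x).re * ‖A x‖ ^ 2 + inner ℝ (A x) (e * (Q x * U x)) := by
      rw [← inner_mul_self_eq, ← inner_add_right]; ring_nf
    have h1' : inner ℝ (B x) (e * (-P x * B x + S x * U x))
        = -((e * P x).re * ‖B x‖ ^ 2) + inner ℝ (B x) (e * (S x * U x)) := by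
      rw [← inner_mul_self_eq, ← inner_neg_right, ← inner_add_right]; ring_nf
    have h2 := abs_inner_coupling_le (z := A x) he hx0 (hAB x hx') (hQ x hx') hC
    have h3 := abs_inner_coupling_le (z := B x) he hx0 (hAB x hx') (hS x hx') hC
    have h4 := mul_le_mul_of_nonneg_left (neg_abs_le (inner ℝ (A x) (e * (Q x * U x)))) hx0.le
    have h5 := mul_le_mul_of_nonneg_left (le_abs_self (inner ℝ (B x) (e * (S x * U x)))) hx0.le
    have h6 := mul_le_mul_of_nonneg_right (hg x hx') (sq_nonneg ‖A x‖)
    have h7 := mul_le_mul_of_nonneg_right (hg x hx') (sq_nonneg ‖B x‖)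
    have h8 : 0 ≤ C * (‖A x‖ - ‖B x‖) ^ 2 := by positivity
    have h9 : 0 ≤ C * ‖A x‖ ^ 2 := by positivity
    have h10 : 0 ≤ C * ‖B x‖ ^ 2 := by positivity
    have h11 : 0 ≤ k * ‖A x‖ ^ 2 := by positivity
    have h12 : 0 ≤ k * ‖B x‖ ^ 2 := by positivity
    rw [h1, h1']
    push_cast
    nlinarith
  have hlow : ∀ x, r ≤ x → c ≤ 16 * D ^ 2 * ‖U x‖ ^ 2 := by
    intro x hx
    have hx0 : 0 < x := hr0.trans_le hx
    have hx' := hr.trans hx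
    have h1 := key x hx
    have h0 : 0 < c * x ^ (2 * k) := by positivity
    have h2 : 2 * ‖B x‖ ≤ ‖A x‖ := abs_le_of_sq_le_sq' (by nlinarith) (norm_nonneg _) |>.2
    have h3 : ‖A x‖ - ‖B x‖ ≤ 2 * ‖P x‖ * ‖U x‖ := by
      have : ‖A x - B x‖ = 2 * ‖P x‖ * ‖U x‖ := by rw [hAB x hx']; simp
      rw [← this]; exact norm_sub_norm_le _ _
    have h4 : ‖A x‖ ≤ 4 * (D * x ^ k * ‖U x‖) := by
      have := mul_le_mul_of_nonneg_right (hP x hx') (norm_nonneg (U x))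
      linarith
    have h5 : ‖A x‖ ^ 2 ≤ (4 * (D * x ^ k * ‖U x‖)) ^ 2 := by gcongr
    have h6 : c * x ^ (2 * k) ≤ 16 * D ^ 2 * ‖U x‖ ^ 2 * x ^ (2 * k) := by
      calc _ ≤ ‖A x‖ ^ 2 := by nlinarith [sq_nonneg ‖B x‖]
        _ ≤ _ := h5
        _ = _ := by ring
    exact le_of_mul_le_mul_right h6 (by positivity)
  have hlim : Tendsto (fun x => 16 * D ^ 2 * ‖U x‖ ^ 2) atTop (𝓝 0) := by
    simpa using (hU.norm.pow 2).const_mul (16 * D ^ 2)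
  exact absurd (ge_of_tendsto hlim ((eventually_ge_atTop r).mono hlow)) (not_le.2 hcpos)

theorem exists_pow_bound_of_norm_sq_le (hR : 0 < R) (he : ‖e‖ = 1) (hC : 0 ≤ C)
    (hB : ∀ r, R ≤ r → HasDerivAt B (e * (S r * U r)) r)
    (hAB : ∀ r, R ≤ r → A r - B r = 2 * P r * U r)
    (hS : ∀ r, R ≤ r → r * ‖S r‖ ≤ C * ‖P r‖)
    (hle : ∀ r, R ≤ r → ‖A r‖ ^ 2 ≤ 4 * ‖B r‖ ^ 2) :
    ∃ (M : ℝ) (N : ℕ), ∀ r, R ≤ r → ‖A r‖ ^ 2 + ‖B r‖ ^ 2 ≤ M * r ^ N := by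
  obtain ⟨N, hN⟩ := exists_nat_ge (3 * C)
  refine ⟨5 * (‖B R‖ ^ 2 / R ^ N), N, fun r hr => ?_⟩
  have := le_pow_of_deriv_le (N := N) hR (fun r hr => (hB r hr).norm_sq) (fun r hr => ?_) hr
  · linarith [hle r hr]
  have hr0 : 0 < r := hR.trans_le hr
  have h3 := abs_inner_coupling_le (z := B r) he hr0 (hAB r hr) (hS r hr) hC
  have h5 := mul_le_mul_of_nonneg_left (le_abs_self (inner ℝ (B r) (e * (S r * U r)))) hr0.le
  have h2 : ‖A r‖ ≤ 2 * ‖B r‖ :=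
    abs_le_of_sq_le_sq' (by nlinarith [hle r hr]) (by positivity) |>.2
  have h7 : 3 * C * ‖B r‖ ^ 2 ≤ N * ‖B r‖ ^ 2 := by gcongr
  have h8 : C * ‖B r‖ * ‖A r‖ ≤ C * ‖B r‖ * (2 * ‖B r‖) := by gcongr
  nlinarith

end System

theorem Polynomial.exists_sq_sub_degree_lt {F : Polynomial ℂ} {k : ℕ} (hF : F.Monic)
    (hdeg : F.natDegree = 2 * k) :
    ∃ p : Polynomial ℂ, p.Monic ∧ p.natDegree = k ∧ (F - p ^ 2).degree < k := by
  suffices h : ∀ i ≤ k, ∃ p : Polynomial ℂ, p.Monic ∧ p.natDegree = k ∧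
      (F - p ^ 2).degree < (2 * k - i : ℕ) by
    simpa [two_mul] using h k le_rfl
  intro i
  induction i with
  | zero =>
    refine fun _ => ⟨Polynomial.X ^ k, Polynomial.monic_X_pow k, by simp, ?_⟩
    have h1 : F.degree = (2 * k : ℕ) := by
      rw [Polynomial.degree_eq_natDegree hF.ne_zero, hdeg]
    rw [Nat.sub_zero, ← h1, ← pow_mul, mul_comm k]
    refine Polynomial.degree_sub_lt_left (by rw [h1, Polynomial.degree_X_pow]) hF.ne_zero ?_
    rw [hF.leadingCoeff, (Polynomial.monic_X_pow _).leadingCoeff]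
  | succ i ih =>
    intro hi
    obtain ⟨p, hp, hpk, hlt⟩ := ih (by omega)
    obtain ⟨j, rfl⟩ : ∃ j, k = j + (i + 1) := ⟨k - (i + 1), by omega⟩
    set c := (F - p ^ 2).coeff (2 * j + i + 1) with hc
    have hlow : (Polynomial.C (c / 2) * Polynomial.X ^ j).degree < p.degree := by
      rw [Polynomial.degree_eq_natDegree hp.ne_zero, hpk]
      refine (Polynomial.degree_C_mul_X_pow_le j _).trans_lt ?_
      exact_mod_cast (by omega : j < j + (i + 1))
    refine ⟨p + Polynomial.C (c / 2) * Polynomial.X ^ j, hp.add_of_left hlow, ?_, ?_⟩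
    · rw [Polynomial.natDegree_add_eq_left_of_degree_lt hlow, hpk]
    · rw [Polynomial.degree_lt_iff_coeff_zero] at hlt ⊢
      intro m hm
      have h1 : F - (p + Polynomial.C (c / 2) * Polynomial.X ^ j) ^ 2 = (F - p ^ 2)
          - Polynomial.C c * (Polynomial.X ^ j * p)
          - Polynomial.C ((c / 2) ^ 2) * Polynomial.X ^ (2 * j) := by
        have : Polynomial.C c = 2 * Polynomial.C (c / 2) := by
          rw [← map_ofNat Polynomial.C, ← Polynomial.C_mul]; congr 1; ring
        rw [this, Polynomial.C_pow]; ring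
      rw [h1, Polynomial.coeff_sub, Polynomial.coeff_sub, Polynomial.coeff_C_mul,
        Polynomial.coeff_X_pow_mul', if_pos (by omega), Polynomial.coeff_C_mul_X_pow,
        if_neg (by omega), sub_zero]
      rcases (show 2 * j + i + 1 ≤ m by omega).eq_or_lt with rfl | hlt'
      · have : p.coeff (2 * j + i + 1 - j) = 1 := by
          rw [show 2 * j + i + 1 - j = p.natDegree by omega]; exact hp
        rw [this, hc]; ring
      · rw [hlt m (by omega), Polynomial.coeff_eq_zero_of_natDegree_lt (p := p) (by omega)]; ring

theorem Polynomial.exists_derivative_eq (p : Polynomial ℂ) :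
    ∃ φ : Polynomial ℂ, Polynomial.derivative φ = p := by
  induction p using Polynomial.induction_on' with
  | add p q hp hq =>
    obtain ⟨φ, rfl⟩ := hp
    obtain ⟨ψ, rfl⟩ := hq
    exact ⟨φ + ψ, Polynomial.derivative_add⟩
  | monomial n a =>
    refine ⟨Polynomial.monomial (n + 1) (a / (n + 1)), ?_⟩
    rw [Polynomial.derivative_monomial]
    have : (n : ℂ) + 1 ≠ 0 := by exact_mod_cast n.succ_ne_zero
    push_cast
    rw [div_mul_cancel₀ _ this]

theorem Polynomial.exists_norm_eval_le (p : Polynomial ℂ) {N : ℕ} (hN : p.natDegree ≤ N) :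
    ∃ C : ℝ, 0 ≤ C ∧ ∀ z, ‖p.eval z‖ ≤ C * (1 + ‖z‖) ^ N := by
  refine ⟨∑ i ∈ Finset.range (N + 1), ‖p.coeff i‖, by positivity, fun z => ?_⟩
  rw [Polynomial.eval_eq_sum_range' (Nat.lt_succ_of_le hN), Finset.sum_mul]
  refine (norm_sum_le _ _).trans (Finset.sum_le_sum fun i hi => ?_)
  rw [norm_mul, norm_pow]
  gcongr
  calc ‖z‖ ^ i ≤ (1 + ‖z‖) ^ i := by gcongr; linarith
    _ ≤ (1 + ‖z‖) ^ N := pow_le_pow_right₀ (by linarith [norm_nonneg z])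
        (by rw [Finset.mem_range] at hi; omega)

theorem Polynomial.exists_mul_norm_eval_le (p : Polynomial ℂ) {k : ℕ} (hp : p.degree < k) :
    ∃ C : ℝ, 0 ≤ C ∧ ∀ z, 1 ≤ ‖z‖ → ‖z‖ * ‖p.eval z‖ ≤ C * ‖z‖ ^ k := by
  rcases k with _ | k
  · exact ⟨0, le_rfl, fun z _ => by simp [show p = 0 by simpa using hp]⟩
  have hp : p.natDegree ≤ k := by
    rcases eq_or_ne p 0 with rfl | h0
    · simp
    · exact Nat.le_of_lt_succ ((Polynomial.natDegree_lt_iff_degree_lt h0).2 hp)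
  obtain ⟨C, hC, h⟩ := p.exists_norm_eval_le hp
  refine ⟨C * 2 ^ k, by positivity, fun z hz => ?_⟩
  calc ‖z‖ * ‖p.eval z‖ ≤ ‖z‖ * (C * (2 * ‖z‖) ^ k) := by
        gcongr
        exact (h z).trans (by gcongr; linarith)
    _ = _ := by ring

theorem Differentiable.exists_polynomial_of_norm_le {f : ℂ → ℂ} (hf : Differentiable ℂ f)
    {M : ℝ} {N : ℕ} (hb : ∀ z, ‖f z‖ ≤ M * (1 + ‖z‖) ^ N) :
    ∃ Q : Polynomial ℂ, ∀ z, f z = Q.eval z := by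
  induction N generalizing f M with
  | zero =>
    obtain ⟨c, hc⟩ := hf.exists_const_forall_eq_of_bounded
      (isBounded_iff_forall_norm_le.2 ⟨M, by rintro _ ⟨z, rfl⟩; simpa using hb z⟩)
    exact ⟨Polynomial.C c, by simpa using hc⟩
  | succ N ih =>
    have hg : Differentiable ℂ (dslope f 0) := by
      rw [← differentiableOn_univ] at hf ⊢
      exact (Complex.differentiableOn_dslope univ_mem).2 hf
    have hM : 0 ≤ M := by simpa using (norm_nonneg _).trans (hb 0)
    obtain ⟨K, hK⟩ := (isCompact_closedBall (0 : ℂ) 1).exists_bound_of_continuousOn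
      hg.continuous.continuousOn
    obtain ⟨Q, hQ⟩ := ih hg (M := max K (4 * M)) fun z => by
      rcases le_total ‖z‖ 1 with hz | hz
      · have h1 := hK z (by simpa using hz)
        have h2 : (1 : ℝ) ≤ (1 + ‖z‖) ^ N := one_le_pow₀ (by linarith [norm_nonneg z])
        calc _ ≤ max K (4 * M) * 1 := by simp [h1]
          _ ≤ _ := mul_le_mul_of_nonneg_left h2 (le_max_of_le_right (by positivity))
      · have hz0 : 0 < ‖z‖ := by linarith
        rw [dslope_of_ne _ (norm_pos_iff.1 hz0), slope_def_field, norm_div, sub_zero,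
          div_le_iff₀ hz0]
        have h1 : M ≤ M * (1 + ‖z‖) ^ (N + 1) :=
          le_mul_of_one_le_right hM (one_le_pow₀ (by linarith))
        calc ‖f z - f 0‖ ≤ ‖f z‖ + ‖f 0‖ := norm_sub_le _ _
          _ ≤ 2 * M * (1 + ‖z‖) ^ N * (1 + ‖z‖) := by
            have h0 := hb 0
            simp only [norm_zero, add_zero, one_pow, mul_one] at h0
            have hz' := hb z
            rw [pow_succ, ← mul_assoc] at hz' h1
            linarith
          _ ≤ 2 * M * (1 + ‖z‖) ^ N * (2 * ‖z‖) := by gcongr; linarith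
          _ = 4 * M * (1 + ‖z‖) ^ N * ‖z‖ := by ring
          _ ≤ _ := by gcongr; exact le_max_right _ _
    refine ⟨Polynomial.C (f 0) + Polynomial.X * Q, fun z => ?_⟩
    have := sub_smul_dslope f 0 z
    simp only [sub_zero, smul_eq_mul] at this
    simp only [Polynomial.eval_add, Polynomial.eval_C, Polynomial.eval_mul, Polynomial.eval_X,
      ← hQ, this]
    ring

theorem exists_pow_bound_of_strip {u : ℂ → ℂ} (hu : Differentiable ℂ u) {m : ℕ} (hm : 1 ≤ m)
    {K : ℝ} (hK : 0 ≤ K) (hgrowth : ∀ z, ‖u z‖ ≤ Real.exp (K * (1 + ‖z‖) ^ m))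
    {a b : ℝ} (hab : a < b) (hba : m * (b - a) < Real.pi)
    (hray : ∀ θ, θ = a ∨ θ = b → ∃ (M : ℝ) (N : ℕ), ∀ r : ℝ, 0 ≤ r →
      ‖u (r * exp (θ * I))‖ ≤ M * (1 + r) ^ N) :
    ∃ (M : ℝ) (N : ℕ), 0 ≤ M ∧ ∀ w : ℂ, a ≤ w.im → w.im ≤ b →
      ‖u (exp w)‖ ≤ M * (1 + ‖exp w‖) ^ N := by
  obtain ⟨M₁, N₁, h₁⟩ := hray a (Or.inl rfl)
  obtain ⟨M₂, N₂, h₂⟩ := hray b (Or.inr rfl)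
  have hM₁ : 0 ≤ M₁ := by simpa using (norm_nonneg _).trans (h₁ 0 le_rfl)
  have hM₂ : 0 ≤ M₂ := by simpa using (norm_nonneg _).trans (h₂ 0 le_rfl)
  set M := M₁ + M₂
  set N := N₁ + N₂
  have hm' : (1 : ℝ) ≤ m := by exact_mod_cast hm
  have hmono : ∀ {x : ℝ}, 0 ≤ x → M₁ * (1 + x) ^ N₁ ≤ M * (1 + x) ^ N ∧
      M₂ * (1 + x) ^ N₂ ≤ M * (1 + x) ^ N := fun {x} hx => by
    constructor
    · exact mul_le_mul (by simp [M, hM₂])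
        (pow_le_pow_right₀ (by linarith) (by simp [N])) (by positivity) (by positivity)
    · exact mul_le_mul (by simp [M, hM₁])
        (pow_le_pow_right₀ (by linarith) (by simp [N])) (by positivity) (by positivity)
  have hedge : ∀ w : ℂ, w.im = a ∨ w.im = b → ‖u (exp w)‖ ≤ M * (1 + ‖exp w‖) ^ N := by
    intro w hw
    have he : exp w = (Real.exp w.re : ℝ) * exp (w.im * I) := by
      rw [Complex.ofReal_exp, ← Complex.exp_add, Complex.re_add_im]
    have hn : ‖exp w‖ = Real.exp w.re := Complex.norm_exp w
    rw [hn, he]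
    rcases hw with hw | hw <;> rw [hw]
    · exact (h₁ _ (Real.exp_pos _).le).trans (hmono (Real.exp_pos _).le).1
    · exact (h₂ _ (Real.exp_pos _).le).trans (hmono (Real.exp_pos _).le).2
  set D : ℂ → ℂ := fun w => 1 + exp (w - ((a + b) / 2 : ℝ) * I) with hD
  have hDre : ∀ w : ℂ, a ≤ w.im → w.im ≤ b →
      0 ≤ (exp (w - ((a + b) / 2 : ℝ) * I)).re := by
    intro w h1 h2
    rw [Complex.exp_re]
    refine mul_nonneg (Real.exp_pos _).le (Real.cos_nonneg_of_mem_Icc ?_)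
    have : (w - ((a + b) / 2 : ℝ) * I).im = w.im - (a + b) / 2 := by
      rw [sub_im, mul_I_im, ofReal_re]
    rw [this]
    constructor <;> nlinarith
  have hnorm : ∀ w : ℂ, ‖exp (w - ((a + b) / 2 : ℝ) * I)‖ = ‖exp w‖ := by
    intro w
    rw [Complex.norm_exp, Complex.norm_exp, sub_re, mul_I_re, ofReal_im, neg_zero, sub_zero]
  have hD1 : ∀ w : ℂ, a ≤ w.im → w.im ≤ b → 1 ≤ ‖D w‖ := by
    intro w h1 h2
    refine le_trans ?_ (Complex.re_le_norm _)
    simpa [hD] using hDre w h1 h2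
  have hD2 : ∀ w : ℂ, a ≤ w.im → w.im ≤ b → 1 + ‖exp w‖ ≤ 2 * ‖D w‖ := by
    intro w h1 h2
    have : ‖exp w‖ ≤ ‖D w‖ := by
      rw [← hnorm w]
      refine abs_le_of_sq_le_sq' ?_ (norm_nonneg _) |>.2
      rw [← Complex.normSq_eq_norm_sq, ← Complex.normSq_eq_norm_sq, Complex.normSq_apply,
        Complex.normSq_apply]
      simp only [hD, add_re, one_re, add_im, one_im]
      nlinarith [hDre w h1 h2]
    linarith [hD1 w h1 h2]
  have hD3 : ∀ w : ℂ, ‖D w‖ ≤ 1 + ‖exp w‖ := by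
    intro w
    rw [← hnorm w]
    exact (norm_add_le _ _).trans (by simp)
  set h : ℂ → ℂ := fun w => u (exp w) / D w ^ N with hh
  have hdiff : DiffContOnCl ℂ h (im ⁻¹' Set.Ioo a b) := by
    refine DifferentiableOn.diffContOnCl fun w hw => ?_
    rw [Complex.closure_preimage_im, closure_Ioo hab.ne] at hw
    have hne : D w ≠ 0 := norm_pos_iff.1 (zero_lt_one.trans_le (hD1 w hw.1 hw.2))
    have hDd : DifferentiableAt ℂ D w := by simp only [hD]; fun_prop
    exact (((hu (exp w)).fun_comp' w Complex.differentiable_exp.differentiableAt).div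
      (hDd.pow N) (pow_ne_zero _ hne)).differentiableWithinAt
  have hbound : ∀ w : ℂ, w.im = a ∨ w.im = b → ‖h w‖ ≤ M * 2 ^ N := by
    intro w hw
    have hwa : a ≤ w.im := by rcases hw with hw | hw <;> linarith
    have hwb : w.im ≤ b := by rcases hw with hw | hw <;> linarith
    have hpos := zero_lt_one.trans_le (hD1 w hwa hwb)
    rw [hh, norm_div, norm_pow, div_le_iff₀ (pow_pos hpos N)]
    calc _ ≤ M * (1 + ‖exp w‖) ^ N := hedge w hw
      _ ≤ M * (2 * ‖D w‖) ^ N := by gcongr; exact hD2 w hwa hwb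
      _ = _ := by ring
  have hO : ∃ c < Real.pi / (b - a), ∃ B, h =O[comap (_root_.abs ∘ re) atTop ⊓
      𝓟 (im ⁻¹' Set.Ioo a b)] fun z ↦ Real.exp (B * Real.exp (c * |z.re|)) := by
    refine ⟨m, by rwa [lt_div_iff₀ (sub_pos.2 hab)], K * 2 ^ m, ?_⟩
    refine Asymptotics.IsBigO.of_bound 1 (eventually_inf_principal.2 (.of_forall fun w hw => ?_))
    have hpos := hD1 w hw.1.le hw.2.le
    rw [one_mul, Real.norm_of_nonneg (Real.exp_pos _).le, hh, norm_div, norm_pow]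
    refine (div_le_self (norm_nonneg _) (one_le_pow₀ hpos)).trans ((hgrowth _).trans ?_)
    rw [Real.exp_le_exp, mul_assoc, Real.exp_nat_mul, ← mul_pow]
    gcongr
    rw [Complex.norm_exp]
    have h1 : Real.exp w.re ≤ Real.exp |w.re| := Real.exp_le_exp.2 (le_abs_self _)
    have h2 : 1 ≤ Real.exp |w.re| := Real.one_le_exp (abs_nonneg _)
    linarith
  refine ⟨M * 2 ^ N, N, by positivity, fun w hwa hwb => ?_⟩
  have := PhragmenLindelof.horizontal_strip hdiff hO (fun z hz => hbound z (Or.inl hz))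
    (fun z hz => hbound z (Or.inr hz)) hwa hwb
  have hpos := zero_lt_one.trans_le (hD1 w hwa hwb)
  rw [hh, norm_div, norm_pow, div_le_iff₀ (pow_pos hpos N)] at this
  refine this.trans ?_
  gcongr
  exact hD3 w

theorem HasDerivAt.comp_ofReal_mul_const {f : ℂ → ℂ} {f' e : ℂ} {r : ℝ}
    (h : HasDerivAt f f' (r * e)) : HasDerivAt (fun r : ℝ => f (r * e)) (e * f') r := by
  have h1 : HasDerivAt (fun z : ℂ => z * e) e (r : ℂ) := by
    simpa using (hasDerivAt_id' (r : ℂ)).mul_const e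
  have := (h.comp (r : ℂ) h1).comp_ofReal
  rw [mul_comm]
  exact this

section PolynomialEquation

variable {u v : ℂ → ℂ} {p q : Polynomial ℂ} {k : ℕ}

theorem exists_norm_le_exp (hp : p.natDegree ≤ k) (hq : q.natDegree ≤ k)
    (hu : ∀ z, HasDerivAt u (v z) z)
    (hv : ∀ z, HasDerivAt v (2 * p.eval z * v z + q.eval z * u z) z) :
    ∃ K : ℝ, 0 ≤ K ∧ ∀ z, ‖u z‖ ≤ Real.exp (K * (1 + ‖z‖) ^ (k + 1)) := by
  obtain ⟨Cp, hCp, hp'⟩ := p.exists_norm_eval_le hp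
  obtain ⟨Cq, hCq, hq'⟩ := q.exists_norm_eval_le hq
  set L : ℝ := 1 + Cq + 4 * Cp with hL
  set f₀ : ℝ := ‖u 0‖ ^ 2 + ‖v 0‖ ^ 2 with hf₀
  have hf₀' : 0 ≤ f₀ := by positivity
  have hL0 : 0 ≤ L := by positivity
  refine ⟨f₀ + L, by positivity, fun z => ?_⟩
  set e : ℂ := exp (z.arg * I) with he
  have hen : ‖e‖ = 1 := Complex.norm_exp_ofReal_mul_I _
  have hz : (‖z‖ : ℂ) * e = z := Complex.norm_mul_exp_arg_mul_I z
  have hX : 1 ≤ (1 + ‖z‖) ^ (k + 1) := one_le_pow₀ (by linarith [norm_nonneg z])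
  have main := le_exp_of_deriv_le (C := L) (N := k)
    (fun r _ => (hu (r * e)).comp_ofReal_mul_const.norm_sq.fun_add
      (hv (r * e)).comp_ofReal_mul_const.norm_sq) (fun r hr => ?_) (norm_nonneg z)
  · simp only [ofReal_zero, zero_mul, hz] at main
    have h1 : ‖u z‖ ^ 2 ≤ Real.exp ((f₀ + L) * (1 + ‖z‖) ^ (k + 1)) := by
      calc ‖u z‖ ^ 2 ≤ ‖u z‖ ^ 2 + ‖v z‖ ^ 2 := le_add_of_nonneg_right (sq_nonneg _)
        _ ≤ Real.exp f₀ * Real.exp (L * ((1 + ‖z‖) ^ (k + 1) - 1)) :=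
          main.trans (by gcongr; linarith [Real.add_one_le_exp f₀])
        _ ≤ _ := by
          rw [← Real.exp_add, Real.exp_le_exp]
          nlinarith
    rcases le_total ‖u z‖ 1 with h | h
    · exact h.trans (Real.one_le_exp (by positivity))
    · exact (le_self_pow₀ h two_ne_zero).trans h1
  · set U := u (r * e)
    set V := v (r * e)
    set Pz := p.eval ((r : ℂ) * e)
    set Qz := q.eval ((r : ℂ) * e)
    have hn : ‖(r : ℂ) * e‖ = r := by rw [norm_mul, hen, mul_one, Complex.norm_of_nonneg hr]
    have hP : ‖Pz‖ ≤ Cp * (1 + r) ^ k := hn ▸ hp' (r * e)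
    have hQ : ‖Qz‖ ≤ Cq * (1 + r) ^ k := hn ▸ hq' (r * e)
    set X := (1 + r) ^ k
    have hX : 1 ≤ X := one_le_pow₀ (by linarith)
    have h1 : inner ℝ U (e * V) ≤ ‖U‖ * ‖V‖ := by
      simpa [hen] using real_inner_le_norm U (e * V)
    have h2 : inner ℝ V (e * (2 * Pz * V + Qz * U)) ≤
        ‖V‖ * (2 * (Cp * X) * ‖V‖ + Cq * X * ‖U‖) := by
      refine (real_inner_le_norm _ _).trans ?_
      rw [norm_mul, hen, one_mul]
      gcongr
      refine (norm_add_le _ _).trans ?_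
      simp only [norm_mul, Complex.norm_ofNat]
      gcongr
    have h3 : 2 * (‖U‖ * ‖V‖) ≤ ‖U‖ ^ 2 + ‖V‖ ^ 2 := by nlinarith [sq_nonneg (‖U‖ - ‖V‖)]
    have h4 := mul_le_mul_of_nonneg_left h3 (show 0 ≤ Cq * X by positivity)
    have h5 : 0 ≤ Cp * X * ‖U‖ ^ 2 := by positivity
    have h6 : ‖U‖ ^ 2 + ‖V‖ ^ 2 ≤ X * (‖U‖ ^ 2 + ‖V‖ ^ 2) :=
      le_mul_of_one_le_left (by positivity) hX
    calc _ ≤ 2 * (‖U‖ * ‖V‖) + 2 * (‖V‖ * (2 * (Cp * X) * ‖V‖ + Cq * X * ‖U‖)) := by gcongr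
      _ ≤ L * X * (‖U‖ ^ 2 + ‖V‖ ^ 2) := by rw [hL]; linarith
      _ ≤ L * (k + 1) * X * (‖U‖ ^ 2 + ‖V‖ ^ 2) := by
        gcongr
        exact le_mul_of_one_le_right hL0 (by linarith [(k.cast_nonneg : (0 : ℝ) ≤ k)])

theorem exists_pow_bound_of_ray {φ : Polynomial ℂ} (hpm : p.Monic) (hpk : p.natDegree = k)
    (hq : q.degree < k) (hs : (q - 2 * Polynomial.derivative p).degree < k)
    (hφ : Polynomial.derivative φ = -p)
    (hu : ∀ z, HasDerivAt u (v z) z)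
    (hv : ∀ z, HasDerivAt v (2 * p.eval z * v z + q.eval z * u z) z)
    {θ : ℝ} (hθ : Real.cos ((k + 1 : ℕ) * θ) ≠ 0)
    (hsub : 0 < Real.cos ((k + 1 : ℕ) * θ) → Tendsto
      (fun r : ℝ => u (r * exp (θ * I)) * exp (φ.eval (r * exp (θ * I)))) atTop (𝓝 0)) :
    ∃ (M : ℝ) (N : ℕ), ∀ r : ℝ, 0 ≤ r → ‖u (r * exp (θ * I))‖ ≤ M * (1 + r) ^ N := by
  set e : ℂ := exp (θ * I) with he
  have hen : ‖e‖ = 1 := Complex.norm_exp_ofReal_mul_I _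
  set s := q - 2 * Polynomial.derivative p with hs_def
  have hlow : (p - Polynomial.X ^ k).degree < (k : WithBot ℕ) := by
    have h1 : p.degree = k := by rw [Polynomial.degree_eq_natDegree hpm.ne_zero, hpk]
    rw [← h1]
    refine Polynomial.degree_sub_lt_left (by rw [h1, Polynomial.degree_X_pow]) hpm.ne_zero ?_
    rw [hpm.leadingCoeff, (Polynomial.monic_X_pow _).leadingCoeff]
  obtain ⟨C₀, hC₀, hp₀⟩ := Polynomial.exists_mul_norm_eval_le _ hlow
  obtain ⟨C₁, hC₁, hq₁⟩ := Polynomial.exists_mul_norm_eval_le _ hq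
  obtain ⟨C₂, hC₂, hs₂⟩ := Polynomial.exists_mul_norm_eval_le _ hs
  set C := 2 * C₁ + 2 * C₂ with hC_def
  have hC : 0 ≤ C := by positivity
  set c := Real.cos ((k + 1 : ℕ) * θ) with hc_def
  have hc : 0 < |c| := abs_pos.2 hθ
  set R : ℝ := max (1 + 2 * C₀) ((C₀ + 5 * C + 4 * k) / |c|) with hR_def
  have hR1 : ∀ r, R ≤ r → 1 ≤ r := fun r hr =>
    (le_add_of_nonneg_right (by positivity)).trans ((le_max_left _ _).trans hr)
  have hR : 0 < R := zero_lt_one.trans_le (hR1 R le_rfl)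
  have hn : ∀ r, R ≤ r → ‖(r : ℂ) * e‖ = r := fun r hr => by
    rw [norm_mul, hen, mul_one, Complex.norm_of_nonneg (by linarith [hR1 r hr])]
  have hrk : ∀ r, R ≤ r → 1 ≤ r ^ k := fun r hr => one_le_pow₀ (hR1 r hr)
  have herr : ∀ r, R ≤ r → r * ‖p.eval (r * e) - (r * e) ^ k‖ ≤ C₀ * r ^ k := fun r hr => by
    have := hp₀ (r * e) (by rw [hn r hr]; exact hR1 r hr)
    rwa [hn r hr, Polynomial.eval_sub, Polynomial.eval_pow, Polynomial.eval_X] at this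
  have herr' : ∀ r, R ≤ r → ‖p.eval (r * e) - (r * e) ^ k‖ ≤ r ^ k / 2 := fun r hr => by
    have h1 : 2 * C₀ ≤ r := by
      have := (le_max_left _ _).trans hr
      linarith
    have h2 := herr r hr
    have h3 : 0 < r := by linarith [hR1 r hr]
    have h4 := mul_le_mul_of_nonneg_right h1 (pow_nonneg h3.le k)
    refine le_of_mul_le_mul_left ?_ h3
    linarith
  have hpow : ∀ r, R ≤ r → ‖((r : ℂ) * e) ^ k‖ = r ^ k := fun r hr => by rw [norm_pow, hn r hr]
  have hP2 : ∀ r, R ≤ r → r ^ k ≤ 2 * ‖p.eval (r * e)‖ := fun r hr => by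
    have := norm_sub_norm_le (((r : ℂ) * e) ^ k) (p.eval (r * e))
    rw [norm_sub_rev, hpow r hr] at this
    linarith [herr' r hr]
  have hP : ∀ r, R ≤ r → ‖p.eval (r * e)‖ ≤ 2 * r ^ k := fun r hr => by
    have := norm_sub_norm_le (p.eval (r * e)) (((r : ℂ) * e) ^ k)
    rw [hpow r hr] at this
    linarith [herr' r hr, hrk r hr]
  have hQ : ∀ r, R ≤ r → r * ‖q.eval (r * e)‖ ≤ C * ‖p.eval (r * e)‖ := fun r hr => by
    have h1 := hq₁ (r * e) (by rw [hn r hr]; exact hR1 r hr)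
    rw [hn r hr] at h1
    have h2 := mul_le_mul_of_nonneg_left (hP2 r hr) hC₁
    have h3 : 0 ≤ C₂ * ‖p.eval (r * e)‖ := by positivity
    rw [hC_def]; linarith
  have hS : ∀ r, R ≤ r → r * ‖s.eval (r * e)‖ ≤ C * ‖p.eval (r * e)‖ := fun r hr => by
    have h1 := hs₂ (r * e) (by rw [hn r hr]; exact hR1 r hr)
    rw [hn r hr] at h1
    have h2 := mul_le_mul_of_nonneg_left (hP2 r hr) hC₂
    have h3 : 0 ≤ C₁ * ‖p.eval (r * e)‖ := by positivity
    rw [hC_def]; linarith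
  have hre : ∀ r, R ≤ r → |r * (e * p.eval (r * e)).re - r * (r ^ k * c)| ≤ C₀ * r ^ k := by
    intro r hr
    have h1 : (e * ((r : ℂ) * e) ^ k).re = r ^ k * c := by
      have : e * ((r : ℂ) * e) ^ k = (r ^ k : ℝ) * exp (((k + 1 : ℕ) * θ : ℝ) * I) := by
        push_cast
        rw [mul_pow, he, ← Complex.exp_nat_mul, mul_left_comm, ← Complex.exp_add]
        congr 2; ring
      rw [this, Complex.re_ofReal_mul, Complex.exp_ofReal_mul_I_re]
    have h3 : 0 < r := by linarith [hR1 r hr]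
    rw [← h1, ← mul_sub, ← Complex.sub_re, ← mul_sub, abs_mul, abs_of_pos h3]
    refine le_trans ?_ (herr r hr)
    gcongr
    refine (Complex.abs_re_le_norm _).trans ?_
    rw [norm_mul, hen, one_mul]
  have hrc : ∀ r, R ≤ r → (C₀ + 5 * C + 4 * k) * r ^ k ≤ r * (r ^ k * |c|) := fun r hr => by
    have h1 : (C₀ + 5 * C + 4 * k) / |c| ≤ r := (le_max_right _ _).trans hr
    rw [div_le_iff₀ hc] at h1
    have := mul_le_mul_of_nonneg_right h1 (zero_le_one.trans (hrk r hr))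
    linarith
  have hA : ∀ r : ℝ, R ≤ r → HasDerivAt (fun r : ℝ => v (r * e))
      (e * (2 * p.eval (r * e) * v (r * e) + q.eval (r * e) * u (r * e))) r :=
    fun r _ => (hv _).comp_ofReal_mul_const
  have hBz : ∀ z, HasDerivAt (fun z => v z - 2 * p.eval z * u z) (s.eval z * u z) z := fun z => by
    refine ((hv z).sub (((p.hasDerivAt z).const_mul 2).mul (hu z))).congr_deriv ?_
    simp only [hs_def, Polynomial.eval_sub, Polynomial.eval_mul, Polynomial.eval_ofNat]
    ring
  have hB : ∀ r : ℝ, R ≤ r → HasDerivAt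
      (fun r : ℝ => v (r * e) - 2 * p.eval (r * e) * u (r * e))
      (e * (s.eval (r * e) * u (r * e))) r :=
    fun r _ => (hBz (r * e)).comp_ofReal_mul_const
  have hAB : ∀ r : ℝ, R ≤ r → v (r * e) - (v (r * e) - 2 * p.eval (r * e) * u (r * e))
      = 2 * p.eval (r * e) * u (r * e) := fun r _ => by ring
  have key : ∃ (M : ℝ) (N : ℕ), ∀ r : ℝ, R ≤ r →
      ‖v (r * e)‖ ^ 2 + ‖v (r * e) - 2 * p.eval (r * e) * u (r * e)‖ ^ 2 ≤ M * r ^ N := by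
    rcases lt_or_gt_of_ne hθ with hneg | hpos
    · refine exists_pow_bound_of_re_nonpos hR hen hC hA hB hAB hQ hS fun r hr => ?_
      have h1 := hrc r hr
      have h2 := (abs_le.1 (hre r hr)).2
      rw [abs_of_neg hneg] at h1
      have h3 : 0 ≤ (5 * C + 4 * k) * r ^ k := by have := hrk r hr; positivity
      refine nonpos_of_mul_nonpos_right (a := r) ?_ (by linarith [hR1 r hr])
      linarith
    · refine exists_pow_bound_of_norm_sq_le hR hen hC hB hAB hS fun r hr => ?_
      have hW : ∀ r : ℝ, HasDerivAt (fun r : ℝ => exp (φ.eval (r * e)))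
          (e * (exp (φ.eval (r * e)) * (-p).eval (r * e))) r := fun r => by
        rw [← hφ]
        exact ((φ.hasDerivAt _).cexp).comp_ofReal_mul_const
      have := norm_sq_le_of_tendsto_zero (D := 2) (k := k)
        (P := fun r => p.eval (r * e)) (Q := fun r => q.eval (r * e))
        (S := fun r => s.eval (r * e)) hR hen hC
        (fun r hr => ((hA r hr).fun_mul (hW r)).congr_deriv ?_)
        (fun r hr => ((hB r hr).fun_mul (hW r)).congr_deriv ?_)
        (fun r hr => ?_) hQ hS (fun r hr => ?_) hP (hsub hpos) hr
      · rw [norm_mul, norm_mul, mul_pow, mul_pow, ← mul_assoc] at this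
        exact le_of_mul_le_mul_right this (by have := norm_pos_iff.2 (exp_ne_zero (φ.eval (r * e))); positivity)
      · rw [Polynomial.eval_neg]; ring
      · rw [Polynomial.eval_neg]; ring
      · ring
      · have h1 := hrc r hr
        have h2 := (abs_le.1 (hre r hr)).1
        rw [abs_of_pos hpos] at h1
        have h3 : 5 * C + 4 * k ≤ (5 * C + 4 * k) * r ^ k :=
          le_mul_of_one_le_right (by positivity) (hrk r hr)
        linarith
  obtain ⟨M, N, hM⟩ := key
  have hcont : Continuous fun r : ℝ => u (r * e) :=
    (continuous_iff_continuousAt.2 fun z => (hu z).continuousAt).comp (by fun_prop)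
  obtain ⟨K, hK⟩ := (isCompact_Icc (a := 0) (b := R)).exists_bound_of_continuousOn
    hcont.continuousOn
  refine ⟨max K (1 + 2 * |M|), N, fun r hr => ?_⟩
  have h1N : 1 ≤ (1 + r) ^ N := one_le_pow₀ (by linarith)
  rcases le_total r R with hrR | hrR
  · calc _ ≤ max K (1 + 2 * |M|) * 1 := by simp [hK r ⟨hr, hrR⟩]
      _ ≤ _ := mul_le_mul_of_nonneg_left h1N (le_max_of_le_right (by positivity))
  · have h1 := hM r hrR
    set a := v (r * e)
    set b := a - 2 * p.eval (r * e) * u (r * e) with hb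
    have h2 : ‖u (r * e)‖ ≤ ‖a‖ + ‖b‖ := by
      have h3 : ‖a - b‖ = 2 * ‖p.eval (r * e)‖ * ‖u (r * e)‖ := by
        rw [hb, sub_sub_cancel]; simp
      have h4 : 1 ≤ 2 * ‖p.eval (r * e)‖ := (hrk r hrR).trans (hP2 r hrR)
      exact (le_mul_of_one_le_left (norm_nonneg _) h4).trans (h3 ▸ norm_sub_le a b)
    have h5 : M * r ^ N ≤ |M| * (1 + r) ^ N := by
      gcongr
      · exact le_abs_self M
      · linarith
    calc ‖u (r * e)‖ ≤ 1 + 2 * (‖a‖ ^ 2 + ‖b‖ ^ 2) := by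
          nlinarith [sq_nonneg (‖a‖ - ‖b‖), sq_nonneg (‖a‖ + ‖b‖ - 1)]
      _ ≤ (1 + 2 * |M|) * (1 + r) ^ N := by linarith
      _ ≤ _ := by gcongr; exact le_max_right _ _

end PolynomialEquation

theorem Differentiable.exists_polynomial_of_rays {u : ℂ → ℂ} (hu : Differentiable ℂ u) {m : ℕ}
    (hm : 1 ≤ m) {K : ℝ} (hK : 0 ≤ K)
    (hgrowth : ∀ z, ‖u z‖ ≤ Real.exp (K * (1 + ‖z‖) ^ m))
    (hray : ∀ θ : ℝ, Real.cos (m * θ) ≠ 0 → ∃ (M : ℝ) (N : ℕ), ∀ r : ℝ, 0 ≤ r →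
      ‖u (r * Complex.exp (θ * I))‖ ≤ M * (1 + r) ^ N) :
    ∃ Q : Polynomial ℂ, ∀ z, u z = Q.eval z := by
  have hm0 : (0 : ℝ) < m := by exact_mod_cast hm
  have hπ := Real.pi_pos
  set ang : ℤ → ℝ := fun l => (2 * l + 1) * Real.pi / (4 * m) with hang
  have hgap : ∀ l, ang (l + 1) - ang l = Real.pi / (2 * m) := fun l => by
    simp only [hang]; push_cast; field_simp; ring
  have hgood : ∀ l, Real.cos (m * ang l) ≠ 0 := fun l h => by
    obtain ⟨j, hj⟩ := Real.cos_eq_zero_iff.1 h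
    simp only [hang] at hj
    field_simp at hj
    have : (2 * l + 1 : ℝ) = 2 * (2 * j + 1) := by linarith
    have : 2 * l + 1 = 2 * (2 * j + 1) := by exact_mod_cast this
    omega
  have hstrip : ∀ l, ∃ (M : ℝ) (N : ℕ), 0 ≤ M ∧ ∀ w : ℂ, ang l ≤ w.im → w.im ≤ ang (l + 1) →
      ‖u (Complex.exp w)‖ ≤ M * (1 + ‖Complex.exp w‖) ^ N := fun l => by
    refine exists_pow_bound_of_strip hu hm hK hgrowth ?_ ?_ ?_
    · rw [← sub_pos, hgap]; positivity
    · rw [hgap]; field_simp; linarith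
    · rintro θ (rfl | rfl)
      · exact hray _ (hgood _)
      · exact hray _ (hgood _)
  choose M N hM hMN using hstrip
  set T : Finset ℤ := Finset.Icc (-(2 * m + 1)) (2 * m + 1) with hT
  have hnonneg : ∀ l ∈ T, 0 ≤ M l := fun l _ => hM l
  have hnonzero : ∀ z, z ≠ 0 → ‖u z‖ ≤ (∑ l ∈ T, M l) * (1 + ‖z‖) ^ (∑ l ∈ T, N l) := by
    intro z hz
    set x : ℝ := (4 * m * z.arg / Real.pi - 1) / 2 with hx
    have harg : z.arg = (2 * x + 1) * Real.pi / (4 * m) := by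
      rw [hx]; field_simp; ring
    have h1 : ang ⌊x⌋ ≤ z.arg := by
      rw [harg]; simp only [hang]; gcongr; exact Int.floor_le x
    have h2 : z.arg ≤ ang (⌊x⌋ + 1) := by
      rw [harg]; simp only [hang]; gcongr; push_cast; exact (Int.lt_floor_add_one x).le
    have hmem : ⌊x⌋ ∈ T := by
      have h3 : |4 * m * z.arg / Real.pi| ≤ 4 * m := by
        rw [abs_div, abs_mul, abs_of_pos hπ, div_le_iff₀ hπ, abs_of_pos (by positivity)]
        gcongr
        exact abs_arg_le_pi z
      rw [abs_le] at h3
      rw [hT, Finset.mem_Icc]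
      constructor
      · rw [Int.le_floor]; push_cast; linarith
      · rw [← Int.lt_add_one_iff, Int.floor_lt]; push_cast; linarith
    have h4 := hMN ⌊x⌋ (Complex.log z) (by rwa [Complex.log_im]) (by rwa [Complex.log_im])
    rw [Complex.exp_log hz] at h4
    refine h4.trans (mul_le_mul (Finset.single_le_sum hnonneg hmem)
      (pow_le_pow_right₀ (by linarith [norm_nonneg z])
        (Finset.single_le_sum (fun _ _ => Nat.zero_le _) hmem)) (by positivity)
      (Finset.sum_nonneg hnonneg))
  refine hu.exists_polynomial_of_norm_le (M := ‖u 0‖ + ∑ l ∈ T, M l) (N := ∑ l ∈ T, N l)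
    fun z => ?_
  have hX : 1 ≤ (1 + ‖z‖) ^ (∑ l ∈ T, N l) := one_le_pow₀ (by linarith [norm_nonneg z])
  rcases eq_or_ne z 0 with rfl | hz
  · simpa using Finset.sum_nonneg hnonneg
  · refine (hnonzero z hz).trans ?_
    gcongr
    exact le_add_of_nonneg_left (norm_nonneg _)

theorem Polynomial.rootMultiplicity_le_one_of_ode {Q p q : Polynomial ℂ} (hQ : Q ≠ 0)
    (hode : derivative (derivative Q) = 2 * p * derivative Q + q * Q) (z : ℂ) :
    Q.rootMultiplicity z ≤ 1 := by
  by_contra! hlt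
  have h2 := hlt
  rw [one_lt_rootMultiplicity_iff_isRoot hQ] at h2
  have h3 := derivative_rootMultiplicity_of_root h2.1
  have h4 := derivative_rootMultiplicity_of_root h2.2
  have hdvd : (X - C z) ^ (Q.rootMultiplicity z - 1) ∣ derivative (derivative Q) := by
    rw [hode]
    refine dvd_add (Dvd.dvd.mul_left ?_ _) (Dvd.dvd.mul_left ?_ _)
    · rw [← h3]; exact pow_rootMultiplicity_dvd _ _
    · exact (pow_dvd_pow _ (Nat.sub_le _ _)).trans (pow_rootMultiplicity_dvd _ _)
  have eq_zero : ∀ {P : Polynomial ℂ}, P.IsRoot z → derivative P = 0 → P = 0 := by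
    intro P hP hP'
    rw [eq_C_of_derivative_eq_zero hP'] at hP ⊢
    simpa using hP
  have hne : derivative (derivative Q) ≠ 0 := fun h =>
    hQ (eq_zero h2.1 (eq_zero h2.2 h))
  have h5 := (le_rootMultiplicity_iff hne).2 hdvd
  omega

theorem tendsto_ray_of_cos_pos {m : ℕ} {y : ℂ → ℂ} (hm : 1 ≤ m)
    (hsub : ∀ i < m, Subdominant (2 * m) (2 * i) y) {θ : ℝ} (hθ : 0 < Real.cos (m * θ)) :
    Tendsto (fun r : ℝ => y (r * exp (θ * I))) atTop (𝓝 0) := by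
  have hm0 : (0 : ℝ) < m := by exact_mod_cast hm
  have hπ := Real.pi_pos
  set s : ℤ := round (m * θ / (2 * Real.pi)) with hs
  set x : ℝ := m * θ - s * (2 * Real.pi) with hx
  have hx1 : |x| ≤ Real.pi := by
    have h1 := abs_sub_round (m * θ / (2 * Real.pi))
    have h2 : x = (m * θ / (2 * Real.pi) - s) * (2 * Real.pi) := by rw [hx]; field_simp
    rw [h2, abs_mul, abs_of_pos (by positivity : 0 < 2 * Real.pi)]
    nlinarith
  have hx2 : |x| < Real.pi / 2 := by
    by_contra! h
    have h1 := Real.cos_nonpos_of_pi_div_two_le_of_le h (by linarith)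
    rw [Real.cos_abs, hx, Real.cos_sub_int_mul_two_pi] at h1
    linarith
  have hmz : (0 : ℤ) < m := by exact_mod_cast hm
  obtain ⟨i, hi⟩ := Int.eq_ofNat_of_zero_le (Int.emod_nonneg s hmz.ne')
  have him : i < m := by have := Int.emod_lt_of_pos s hmz; omega
  set t : ℤ := s / m with ht
  have hst : (s : ℝ) = m * t + i := by
    have := Int.mul_ediv_add_emod s m
    rw [hi] at this
    exact_mod_cast this.symm
  have hdir : DirIn (2 * m) (2 * i) (θ - t * (2 * Real.pi)) := by
    unfold DirIn
    have : θ - t * (2 * Real.pi) - 2 * Real.pi * (2 * i : ℕ) / (2 * m : ℕ) = x / m := by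
      rw [hx, hst]; push_cast; field_simp; ring
    rw [this, abs_div, abs_of_pos hm0, div_lt_iff₀ hm0]
    have hw : Real.pi / (2 * m : ℕ) * m = Real.pi / 2 := by push_cast; field_simp
    rw [Nat.cast_mul, Nat.cast_ofNat] at hw ⊢
    rwa [hw]
  have hexp : exp (((θ - t * (2 * Real.pi) : ℝ) : ℂ) * I) = exp (θ * I) := by
    rw [Complex.exp_eq_exp_iff_exists_int]
    exact ⟨-t, by push_cast; ring⟩
  simpa only [hexp] using hsub i him _ hdir

theorem exists_polynomial_eval_eq_Pol (d : ℕ) (α : Fin (d - 1) → ℂ) (lam : ℂ) (hd : 2 ≤ d) :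
    ∃ F : Polynomial ℂ, F.Monic ∧ F.natDegree = d ∧ ∀ z, F.eval z = Pol d α z - lam := by
  set L : Polynomial ℂ := ∑ i : Fin (d - 1), Polynomial.C (α i) * Polynomial.X ^ ((i : ℕ) + 1)
    - Polynomial.C lam with hL
  have hdeg : L.degree < d := by
    rw [← Polynomial.mem_degreeLT]
    refine sub_mem (sum_mem fun i _ => ?_) ?_ <;> rw [Polynomial.mem_degreeLT]
    · refine (Polynomial.degree_C_mul_X_pow_le _ _).trans_lt ?_
      exact_mod_cast (by omega : (i : ℕ) + 1 < d)
    · refine Polynomial.degree_C_le.trans_lt ?_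
      exact_mod_cast (by omega : 0 < d)
  have hmon := Polynomial.monic_X_pow_add hdeg
  refine ⟨Polynomial.X ^ d + L, hmon, ?_, fun z => ?_⟩
  · rw [Polynomial.natDegree_add_eq_left_of_degree_lt (by rwa [Polynomial.degree_X_pow]),
      Polynomial.natDegree_X_pow]
  · simp [hL, Pol, Polynomial.eval_finsetSum, add_sub_assoc]

theorem stmt5 (d : ℕ) (hd : 2 ≤ d) (hev : Even d) (n : ℕ) (hn : n = d + 2)
    (α : Fin (d - 1) → ℂ) (lam : ℂ) (y : ℂ → ℂ)
    (hy : IsSol d α lam y) (hy0 : y ≠ 0)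
    (hsub : ∀ i : ℕ, i < n / 2 → Subdominant n (2 * i) y) :
    (y ⁻¹' {0}).Finite ∧ (∀ z : ℂ, y z = 0 → deriv y z ≠ 0) ∧
    ∃ Q φ : Polynomial ℂ, (∀ z : ℂ, y z = Q.eval z * Complex.exp (φ.eval z)) ∧
      Q.natDegree = (y ⁻¹' {0}).ncard ∧ φ.natDegree = (d + 2) / 2 := by
  obtain ⟨k, rfl⟩ : ∃ k, d = 2 * k := hev.two_dvd
  have hn2 : n = 2 * (k + 1) := by omega
  subst hn2
  obtain ⟨F, hF, hFdeg, hFeval⟩ := exists_polynomial_eval_eq_Pol _ α lam hd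
  obtain ⟨p, hpm, hpk, hr⟩ := Polynomial.exists_sq_sub_degree_lt hF hFdeg
  obtain ⟨φ, hφ⟩ := Polynomial.exists_derivative_eq (-p)
  have hp' : (Polynomial.derivative p).degree < (k : WithBot ℕ) := by
    have h1 : p.degree = k := by rw [Polynomial.degree_eq_natDegree hpm.ne_zero, hpk]
    exact h1 ▸ Polynomial.degree_derivative_lt hpm.ne_zero
  set q := Polynomial.derivative p + (F - p ^ 2) with hq_def
  have hq : q.degree < (k : WithBot ℕ) := (Polynomial.degree_add_le _ _).trans_lt (max_lt hp' hr)
  have hs : (q - 2 * Polynomial.derivative p).degree < (k : WithBot ℕ) := by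
    rw [show q - 2 * Polynomial.derivative p = (F - p ^ 2) - Polynomial.derivative p by
      rw [hq_def]; ring]
    exact (Polynomial.degree_sub_le _ _).trans_lt (max_lt hr hp')
  obtain ⟨hyd, hyode⟩ := hy
  have hy1 : ∀ z, HasDerivAt y (deriv y z) z := fun z => (hyd z).hasDerivAt
  have hy2 : ∀ z, HasDerivAt (deriv y) (F.eval z * y z) z := fun z => by
    rw [hFeval, ← hyode]
    exact (hyd.deriv z).hasDerivAt
  have hE : ∀ z, HasDerivAt (fun z => exp (-φ.eval z)) (exp (-φ.eval z) * p.eval z) z := fun z => by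
    refine ((φ.hasDerivAt z).fun_neg.cexp).congr_deriv ?_
    rw [hφ, Polynomial.eval_neg, neg_neg]
  set u : ℂ → ℂ := fun z => y z * exp (-φ.eval z) with hu_def
  set v : ℂ → ℂ := fun z => (deriv y z + p.eval z * y z) * exp (-φ.eval z) with hv_def
  have hu : ∀ z, HasDerivAt u (v z) z := fun z =>
    ((hy1 z).fun_mul (hE z)).congr_deriv (by simp only [hv_def]; ring)
  have hv : ∀ z, HasDerivAt v (2 * p.eval z * v z + q.eval z * u z) z := fun z => by
    refine (((hy2 z).fun_add ((p.hasDerivAt z).fun_mul (hy1 z))).fun_mul (hE z)).congr_deriv ?_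
    simp only [hv_def, hu_def, hq_def, Polynomial.eval_add, Polynomial.eval_sub,
      Polynomial.eval_pow]
    ring
  have hyu : ∀ z, u z * exp (φ.eval z) = y z := fun z => by
    simp only [hu_def]
    rw [mul_assoc, ← Complex.exp_add, neg_add_cancel, Complex.exp_zero, mul_one]
  have hq' : q.natDegree ≤ k := Polynomial.natDegree_le_iff_degree_le.2 hq.le
  obtain ⟨K, hK, hgrowth⟩ := exists_norm_le_exp hpk.le hq' hu hv
  have hsub' : ∀ i < k + 1, Subdominant (2 * (k + 1)) (2 * i) y :=
    fun i hi => hsub i (by omega)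
  obtain ⟨Q, hQ⟩ := Differentiable.exists_polynomial_of_rays
    (fun z => (hu z).differentiableAt) k.succ_pos hK hgrowth
    (fun θ hθ => exists_pow_bound_of_ray hpm hpk hq hs hφ hu hv hθ
      fun hpos => by simpa only [hyu] using tendsto_ray_of_cos_pos k.succ_pos hsub' hpos)
  have hyQ : ∀ z, y z = Q.eval z * exp (φ.eval z) := fun z => by rw [← hQ, hyu]
  have hQ0 : Q ≠ 0 := by
    rintro rfl
    exact hy0 (funext fun z => by simp [hyQ])
  have hQu : u = fun z => Q.eval z := funext hQ
  have hv1 : ∀ z, v z = (Polynomial.derivative Q).eval z := fun z =>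
    (hu z).unique (hQu ▸ Q.hasDerivAt z)
  have hQv : v = fun z => (Polynomial.derivative Q).eval z := funext hv1
  have hode : Polynomial.derivative (Polynomial.derivative Q)
      = 2 * p * Polynomial.derivative Q + q * Q := by
    refine Polynomial.funext fun z => ?_
    have := (hv z).unique (hQv ▸ (Polynomial.derivative Q).hasDerivAt z)
    rw [hv1, hQ] at this
    simp [← this]
  have hmult := Polynomial.rootMultiplicity_le_one_of_ode hQ0 hode
  have hzero : y ⁻¹' {0} = Q.roots.toFinset := by
    ext z
    simp [hyQ, hQ0]
  refine ⟨hzero ▸ Finset.finite_toSet _, fun z hz hz' => ?_, Q, φ, hyQ, ?_, ?_⟩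
  · have h1 : Q.IsRoot z := by rw [Polynomial.IsRoot, ← hQ]; simp [hu_def, hz]
    have h2 : (Polynomial.derivative Q).IsRoot z := by
      rw [Polynomial.IsRoot, ← hv1]; simp [hv_def, hz, hz']
    exact (hmult z).not_gt ((Polynomial.one_lt_rootMultiplicity_iff_isRoot hQ0).2 ⟨h1, h2⟩)
  · have hnodup : Q.roots.Nodup := Multiset.nodup_iff_count_le_one.2 fun z => by
      rw [Polynomial.count_roots]; exact hmult z
    rw [hzero, Set.ncard_coe_finset, Multiset.toFinset_card_of_nodup hnodup,
      IsAlgClosed.card_roots_eq_natDegree]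
  · have h1 := Polynomial.natDegree_derivative φ
    rw [hφ, Polynomial.natDegree_neg, hpk] at h1
    omega
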